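/- Let R be a commutative ring, S a multiplicative subset of R, 0 → A → B → C → 0 an S-exact sequence of R-modules and n ≥ 0 an integer. If Ext^{n+1}_R(A, N) and Ext^{n+1}_R(B, N) are uniformly S-torsion for every R-module N, then Ext^{n+2}_R(C, N) is uniformly S-torsion for every R-module N. (That is, the S-projective dimension of C is at most 1 + max{S-pd_R(A), S-pd_R(B)}.) -/

import Mathlib

open CategoryTheory

universe u

/-- A module is uniformly `S`-torsion if a single `s ∈ S` kills it. -/
def UnifSTorsion {R : Type u} [CommRing R] (S : Submonoid R) (M : Type*) [Zero M] [SMul R M] :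
    Prop :=
  ∃ s ∈ S, ∀ m : M, s • m = (0 : M)

/-- The sequence `X --u--> Y --v--> Z` is `S`-exact at `Y`. -/
def SExactAt {R : Type u} [CommRing R] (S : Submonoid R) {X Y Z : Type*}
    [Zero Y] [SMul R Y] [Zero Z] (u : X → Y) (v : Y → Z) : Prop :=
  ∃ s ∈ S, (∀ y : Y, v y = 0 → ∃ x : X, s • y = u x) ∧ ∀ x : X, v (s • u x) = 0

section ExtTorsion

open Abelian

variable {R : Type u} [CommRing R]

lemma smul_eq_zero_iff_of_iso {M N : ModuleCat.{u} R} (e : M ≅ N) (s : R) :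
    (∀ m : M, s • m = 0) ↔ ∀ m : N, s • m = 0 := by
  refine ⟨fun h m ↦ ?_, fun h m ↦ ?_⟩
  · rw [← e.inv_hom_id_apply m, ← map_smul, h, map_zero]
  · rw [← e.hom_inv_id_apply m, ← map_smul, h, map_zero]

lemma smul_homology_eq_zero_iff (T : ShortComplex (ModuleCat.{u} R)) (s : R) :
    (∀ m : T.homology, s • m = 0) ↔ ∀ x : T.X₂, T.g x = 0 → ∃ y : T.X₁, T.f y = s • x := by
  rw [smul_eq_zero_iff_of_iso T.moduleCatHomologyIso]
  constructor
  · intro h x hx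
    have h' := h (Submodule.Quotient.mk ⟨x, hx⟩)
    erw [← Submodule.Quotient.mk_smul, Submodule.Quotient.mk_eq_zero] at h'
    obtain ⟨y, hy⟩ := h'
    exact ⟨y, congrArg Subtype.val hy⟩
  · intro h m
    obtain ⟨⟨x, hx⟩, rfl⟩ := Submodule.Quotient.mk_surjective _ m
    obtain ⟨y, hy⟩ := h x hx
    erw [← Submodule.Quotient.mk_smul, Submodule.Quotient.mk_eq_zero]
    exact ⟨y, Subtype.ext hy⟩

lemma smul_ext_eq_zero_iff_of_resolution {X : ModuleCat.{u} R} (P : ProjectiveResolution X)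
    (N : ModuleCat.{u} R) (n : ℕ) (s : R) :
    (∀ m : ((_root_.Ext R (ModuleCat.{u} R) (n + 1)).obj (Opposite.op X)).obj N, s • m = 0) ↔
      ∀ φ : P.complex.X (n + 1) ⟶ N, P.complex.d (n + 2) (n + 1) ≫ φ = 0 →
        ∃ ψ : P.complex.X n ⟶ N, P.complex.d (n + 1) n ≫ ψ = s • φ := by
  rw [smul_eq_zero_iff_of_iso (P.isoExt (n + 1) N ≪≫
    ShortComplex.homologyMapIso ((P.complex.linearYonedaObj R N).isoSc' n (n + 1) (n + 2)
      (by simp) (by simp))), smul_homology_eq_zero_iff]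
  rfl

lemma smul_abelianExt_eq_zero_iff_of_resolution {X : ModuleCat.{u} R}
    (P : ProjectiveResolution X) (N : ModuleCat.{u} R) (n : ℕ) (s : R) :
    (∀ e : Abelian.Ext X N (n + 1), s • e = 0) ↔
      ∀ φ : P.complex.X (n + 1) ⟶ N, P.complex.d (n + 2) (n + 1) ≫ φ = 0 →
        ∃ ψ : P.complex.X n ⟶ N, P.complex.d (n + 1) n ≫ ψ = s • φ := by
  have key (φ : P.complex.X (n + 1) ⟶ N) (hφ : P.complex.d (n + 2) (n + 1) ≫ φ = 0) :
      s • P.extMk φ (n + 2) rfl hφ = 0 ↔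
        ∃ ψ : P.complex.X n ⟶ N, P.complex.d (n + 1) n ≫ ψ = s • φ := by
    rw [Ext.smul_eq_comp_mk₀, P.extMk_comp_mk₀, P.extMk_eq_zero_iff _ _ _ _ n rfl]
    simp
  refine ⟨fun h φ hφ ↦ (key φ hφ).1 (h _), fun h e ↦ ?_⟩
  obtain ⟨φ, hφ, rfl⟩ := P.extMk_surjective e (n + 2) rfl
  exact (key φ hφ).2 (h φ hφ)

lemma unifSTorsion_ext_iff (S : Submonoid R) (X N : ModuleCat.{u} R) (n : ℕ) :
    UnifSTorsion S (((_root_.Ext R (ModuleCat.{u} R) (n + 1)).obj (Opposite.op X)).obj N) ↔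
      UnifSTorsion S (Abelian.Ext X N (n + 1)) := by
  simp only [UnifSTorsion, smul_ext_eq_zero_iff_of_resolution (projectiveResolution X),
    smul_abelianExt_eq_zero_iff_of_resolution (projectiveResolution X)]

/-- If multiplication by some `s ∈ S` on `X` factors through `Y`, torsion passes from
`Ext Y N n` to `Ext X N n`. -/
lemma UnifSTorsion.ext_of_factorization {S : Submonoid R} {X Y N : ModuleCat.{u} R} {n : ℕ}
    (h : UnifSTorsion S (Abelian.Ext Y N n)) {s : R} (hs : s ∈ S) (a : X ⟶ Y) (b : Y ⟶ X)
    (hab : a ≫ b = s • 𝟙 X) : UnifSTorsion S (Abelian.Ext X N n) := by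
  obtain ⟨t, ht, h⟩ := h
  refine ⟨t * s, S.mul_mem ht hs, fun e ↦ ?_⟩
  have hse : s • e = (Ext.mk₀ a).comp ((Ext.mk₀ b).comp e (zero_add n)) (zero_add n) := by
    rw [Ext.mk₀_comp_mk₀_assoc, hab, Ext.mk₀_smul, Ext.smul_comp, Ext.mk₀_id_comp]
  rw [mul_smul, hse, ← Ext.comp_smul, h, Ext.comp_zero]

lemma unifSTorsion_ext_succ {S : Submonoid R} {X : ModuleCat.{u} R} {n : ℕ}
    (h : ∀ N : ModuleCat.{u} R, UnifSTorsion S (Abelian.Ext X N n)) (N : ModuleCat.{u} R) :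
    UnifSTorsion S (Abelian.Ext X N (n + 1)) := by
  let T := ShortComplex.mk _ _ (Limits.cokernel.condition (Injective.ι N))
  have hT : T.ShortExact :=
    { exact := ShortComplex.exact_of_g_is_cokernel _ (Limits.cokernelIsCokernel T.f) }
  obtain ⟨s, hs, h⟩ := h T.X₃
  refine ⟨s, hs, fun e ↦ ?_⟩
  obtain ⟨e', rfl⟩ := Ext.covariant_sequence_exact₁ X hT e (Ext.eq_zero_of_injective _) rfl
  rw [← Ext.smul_comp, h, Ext.zero_comp]

lemma CategoryTheory.ShortComplex.ShortExact.unifSTorsion_ext_X₃ {S : Submonoid R}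
    {T : ShortComplex (ModuleCat.{u} R)} (hT : T.ShortExact) {N : ModuleCat.{u} R} {n : ℕ}
    (h₁ : UnifSTorsion S (Abelian.Ext T.X₁ N n))
    (h₂ : UnifSTorsion S (Abelian.Ext T.X₂ N (n + 1))) :
    UnifSTorsion S (Abelian.Ext T.X₃ N (n + 1)) := by
  obtain ⟨s, hs, h₁⟩ := h₁
  obtain ⟨t, ht, h₂⟩ := h₂
  refine ⟨s * t, S.mul_mem hs ht, fun e ↦ ?_⟩
  obtain ⟨e', he'⟩ := Ext.contravariant_sequence_exact₃ hT N (t • e)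
    (by rw [Ext.comp_smul, h₂]) (add_comm 1 n)
  rw [mul_smul, ← he', ← Ext.comp_smul, h₁, Ext.comp_zero]

/-- If `t` kills `ker f` and every `s • p k` lies in the range of `f`, there is a linear map `h`
with `f (h k) = (t * s) • p k`. -/
lemma exists_linearMap_lift_smul {K A B : Type*} [AddCommGroup K] [AddCommGroup A]
    [AddCommGroup B] [Module R K] [Module R A] [Module R B] (f : A →ₗ[R] B) (p : K →ₗ[R] B)
    {s t : R} (ht : ∀ x, f x = 0 → t • x = 0) (hs : ∀ k, ∃ x, s • p k = f x) :
    ∃ h : K →ₗ[R] A, ∀ k, f (h k) = (t * s) • p k := by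
  choose q hq using hs
  have uniq {x y : A} (hxy : f x = f y) : t • x = t • y := by
    rw [← sub_eq_zero, ← smul_sub]
    exact ht _ (by rw [map_sub, hxy, sub_self])
  refine ⟨{ toFun := fun k ↦ t • q k, map_add' := fun x y ↦ ?_, map_smul' := fun r x ↦ ?_ },
    fun k ↦ ?_⟩
  · rw [← smul_add]
    exact uniq (by rw [map_add, ← hq, ← hq, ← hq, map_add, smul_add])
  · rw [RingHom.id_apply, smul_comm r t]
    exact uniq (by rw [map_smul, ← hq, ← hq, map_smul, smul_comm])
  · simp [← hq, mul_smul]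

end ExtTorsion

/-- Given an `S`-exact sequence `0 → A → B → C → 0`, if `Ext^{n+1}(A, N)` and
`Ext^{n+1}(B, N)` are uniformly `S`-torsion for all `N`, then `Ext^{n+2}(C, N)` is
uniformly `S`-torsion for all `N` (so `S`-pd C ≤ 1 + max{`S`-pd A, `S`-pd B}). -/
theorem stmt11 {R : Type u} [CommRing R] (S : Submonoid R)
    {A B C : ModuleCat.{u} R} (f : A ⟶ B) (g : B ⟶ C)
    (hA : ∃ s ∈ S, ∀ x : A, f x = 0 → s • x = (0 : A))
    (hB : SExactAt S (⇑f) (⇑g))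
    (hC : ∃ s ∈ S, ∀ c : C, ∃ b : B, s • c = g b)
    (n : ℕ)
    (hApd : ∀ N : ModuleCat.{u} R,
      UnifSTorsion S (((Ext R (ModuleCat.{u} R) (n + 1)).obj (Opposite.op A)).obj N))
    (hBpd : ∀ N : ModuleCat.{u} R,
      UnifSTorsion S (((Ext R (ModuleCat.{u} R) (n + 1)).obj (Opposite.op B)).obj N)) :
    ∀ N : ModuleCat.{u} R,
      UnifSTorsion S (((Ext R (ModuleCat.{u} R) (n + 2)).obj (Opposite.op C)).obj N) := by
  intro N
  simp only [unifSTorsion_ext_iff] at hApd hBpd ⊢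
  obtain ⟨t, ht, hA⟩ := hA
  obtain ⟨s, hs, hB, hgf⟩ := hB
  obtain ⟨r, hr, hC⟩ := hC
  let K := ModuleCat.of R (LinearMap.ker g.hom)
  let I := ModuleCat.of R (LinearMap.range g.hom)
  let T : ShortComplex (ModuleCat.{u} R) :=
    ShortComplex.mk (X₁ := K) (X₃ := I) (ModuleCat.ofHom (LinearMap.ker g.hom).subtype)
      (ModuleCat.ofHom g.hom.rangeRestrict) (by ext x; exact x.2)
  have hT : T.ShortExact :=
    { exact := by
        rw [ShortComplex.moduleCat_exact_iff]
        exact fun x hx ↦ ⟨⟨x, congrArg Subtype.val hx⟩, rfl⟩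
      mono_f := (ModuleCat.mono_iff_injective _).2 (Submodule.injective_subtype _)
      epi_g := (ModuleCat.epi_iff_surjective _).2 g.hom.surjective_rangeRestrict }
  have hK : UnifSTorsion S (Abelian.Ext K N (n + 1)) := by
    obtain ⟨h, hh⟩ := exists_linearMap_lift_smul f.hom (LinearMap.ker g.hom).subtype
      hA (fun k ↦ hB _ k.2)
    refine (hApd N).ext_of_factorization (S.mul_mem hs (S.mul_mem ht hs)) (ModuleCat.ofHom h)
      (ModuleCat.ofHom ((s • f.hom).codRestrict (LinearMap.ker g.hom) hgf)) ?_
    ext k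
    change s • f.hom (h k) = (s * (t * s)) • (k : B)
    rw [hh, smul_smul]
    rfl
  have hI : UnifSTorsion S (Abelian.Ext I N (n + 2)) :=
    hT.unifSTorsion_ext_X₃ hK (unifSTorsion_ext_succ hBpd N)
  refine hI.ext_of_factorization hr
    (ModuleCat.ofHom ((r • LinearMap.id).codRestrict (LinearMap.range g.hom) fun c ↦ ?_))
    (ModuleCat.ofHom (LinearMap.range g.hom).subtype) ?_
  · obtain ⟨b, hb⟩ := hC c
    exact ⟨b, hb.symm⟩
  · ext c
    rfl
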